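/- For every n ≥ 2, there exists a countable family of pairwise disjoint measurable subsets of ℝ^n, each of Lebesgue measure at most 1 and of positive Lebesgue measure, whose union is all of ℝ^n, and whose limiting perimeter-per-volume ratio is at most the infimum of the limiting perimeter-per-volume ratios over all partitions of ℝ^n into countably many pairwise disjoint measurable regions of Lebesgue measure exactly 1. -/

import Mathlib

open MeasureTheory Set Metric Filter

/-- The perimeter-per-volume ratio at radius `r` of a countable family of regions in `ℝⁿ`. -/
noncomputable def perimVolRatio (n : ℕ) (R : ℕ → Set (EuclideanSpace ℝ (Fin n))) (r : ℝ) :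
    ENNReal :=
  μH[(n : ℝ) - 1] ((⋃ j, frontier (R j)) ∩ closedBall 0 r) /
    volume (closedBall (0 : EuclideanSpace ℝ (Fin n)) r)

/-- The limiting perimeter-per-volume ratio: `limsup_{r → ∞}` of the ratio at radius `r`. -/
noncomputable def limitRatio (n : ℕ) (R : ℕ → Set (EuclideanSpace ℝ (Fin n))) : ENNReal :=
  Filter.limsup (perimVolRatio n R) Filter.atTop

/-- A partition of `ℝⁿ` into unit volumes: countably many pairwise disjoint measurable sets,
each of Lebesgue measure 1, whose union is all of `ℝⁿ`. -/
def IsUnitPartition (n : ℕ) (R : ℕ → Set (EuclideanSpace ℝ (Fin n))) : Prop :=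
  Pairwise (Function.onFun Disjoint R) ∧ (∀ j, MeasurableSet (R j)) ∧
    (∀ j, volume (R j) = 1) ∧ (⋃ j, R j) = univ

/-!
Almost optimal partitions for the errors `ε k → 0` are used one after another on concentric
shells, so that the infimum `C` of the ratios is attained. On its own shell the `k`-th partition
need not be better than `C` on average: what it does there is its total up to the outer radius
minus its total up to the inner radius. The limsup being at least `C`, the inner radius can be
chosen so that the subtracted total is almost `C` times the volume, and then the difference is at
most `C` times the volume of the shell plus a small multiple of the volume of the ball. The cutting
spheres cost perimeter of order `r ^ (n - 1)`, which is negligible against volume `r ^ n`.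

Cutting a unit cell along a sphere leaves pieces of volume at most one; the null pieces are merged
into other cells. To make this merging harmless, a partition is treated as a labelling and its
walls as the points near which the label is not constant, so that relabelling never creates walls.
-/

open scoped ENNReal NNReal Topology
open Module (finrank finrank_pos)

section Labellings

variable {X ι κ : Type*}

/-- The walls of the partition of `X` into the fibres of the labelling `c`: the points near which
`c` is not constant. -/
def interface [TopologicalSpace X] (c : X → ι) : Set X :=
  {x | ¬ ∀ᶠ y in 𝓝 x, c y = c x}

theorem iUnion_frontier_preimage_singleton [TopologicalSpace X] (c : X → ι) :
    ⋃ i, frontier (c ⁻¹' {i}) = interface c := by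
  ext x
  simp only [mem_iUnion, interface, mem_ofPred_eq]
  refine ⟨fun ⟨i, hi⟩ hx => ?_, fun hx =>
    ⟨c x, subset_closure rfl, fun h => hx (mem_interior_iff_mem_nhds.1 h)⟩⟩
  have hxi : c x = i := by
    obtain ⟨y, hy, hyx⟩ := ((mem_closure_iff_frequently.1 hi.1).and_eventually hx).exists
    exact hyx.symm.trans hy
  exact hi.2 (mem_interior_iff_mem_nhds.2 (hxi ▸ hx))

theorem interface_inter_subset_of_eqOn_comp [TopologicalSpace X] {c : X → κ} {d : X → ι}
    {f : ι → κ} {U : Set X} (hU : IsOpen U) (h : EqOn c (f ∘ d) U) :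
    interface c ∩ U ⊆ interface d := by
  rintro x ⟨hxc, hxU⟩ hxd
  refine hxc ?_
  filter_upwards [hxd, hU.mem_nhds hxU] with y hy hyU
  rw [h hyU, h hxU, Function.comp_apply, hy, Function.comp_apply]

theorem interface_comp_subset [TopologicalSpace X] (f : ι → κ) (c : X → ι) :
    interface (f ∘ c) ⊆ interface c := by
  simpa using interface_inter_subset_of_eqOn_comp isOpen_univ (eqOn_refl (f ∘ c) univ)

/-- A partition of `X` into measurable sets, where empty members are allowed. -/
structure IsMeasurablePartition [MeasurableSpace X] (S : ι → Set X) : Prop where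
  disjoint : Pairwise (Function.onFun Disjoint S)
  measurableSet : ∀ i, MeasurableSet (S i)
  iUnion_eq : ⋃ i, S i = univ

theorem isMeasurablePartition_preimage_singleton [MeasurableSpace X] [MeasurableSpace ι]
    [MeasurableSingletonClass ι] {c : X → ι} (hc : Measurable c) :
    IsMeasurablePartition fun i => c ⁻¹' {i} where
  disjoint := pairwise_disjoint_fiber c
  measurableSet i := hc (measurableSet_singleton i)
  iUnion_eq := iUnion_eq_univ_iff.2 fun x => ⟨c x, rfl⟩

theorem IsMeasurablePartition.exists_label [MeasurableSpace X] [Countable ι] [Nonempty ι]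
    [MeasurableSpace ι] {S : ι → Set X} (hS : IsMeasurablePartition S) :
    ∃ c : X → ι, Measurable c ∧ ∀ i, c ⁻¹' {i} = S i := by
  obtain ⟨c, hc, hcS⟩ := exists_measurable_piecewise S hS.measurableSet (fun i _ => i)
    (fun _ => measurable_const) fun i j hij x hx =>
      ((hS.disjoint hij).le_bot hx).elim
  refine ⟨c, hc, fun i => Subset.antisymm (fun x hx => ?_) fun x hx => hcS i hx⟩
  obtain ⟨j, hj⟩ := iUnion_eq_univ_iff.1 hS.iUnion_eq x
  have hji : j = i := (hcS j hj).symm.trans hx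
  exact hji ▸ hj

/-- A measurable labelling whose fibres, the cells of a partition, have volume at most `v`. -/
structure IsCappedLabelling [MeasurableSpace X] [MeasurableSpace ι] (μ : Measure X) (v : ℝ≥0∞)
    (c : X → ι) : Prop where
  measurable : Measurable c
  measure_le : ∀ i, μ (c ⁻¹' {i}) ≤ v

theorem exists_merge_measure_pos [MeasurableSpace X] {μ : Measure X} [Countable ι]
    {c : X → ι} {v : ℝ≥0∞} (hμ : μ univ = ⊤) (hv : v ≠ ⊤) (hcv : ∀ i, μ (c ⁻¹' {i}) ≤ v) :
    ∃ f : ι → ℕ, ∀ j, 0 < μ (f ∘ c ⁻¹' {j}) ∧ μ (f ∘ c ⁻¹' {j}) ≤ v := by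
  set I : Set ι := {i | μ (c ⁻¹' {i}) ≠ 0}
  have hcI : ∀ᵐ x ∂μ, c x ∈ I := by
    have hnull : μ (⋃ i ∈ Iᶜ, c ⁻¹' {i}) = 0 :=
      (measure_biUnion_null_iff (to_countable _)).2 fun i hi => not_not.1 hi
    rwa [← preimage_iUnion₂, biUnion_of_singleton] at hnull
  have hI : I.Infinite := by
    intro hfin
    have : μ univ < ⊤ := calc
      μ univ ≤ μ (⋃ i ∈ I, c ⁻¹' {i}) := measure_mono_ae (hcI.mono fun x hx _ => mem_biUnion hx rfl)
      _ < ⊤ := measure_biUnion_lt_top hfin fun i _ => (hcv i).trans_lt hv.lt_top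
    exact this.ne hμ
  have := hI.to_subtype
  obtain ⟨e⟩ := nonempty_equiv_of_countable (α := ℕ) (β := I)
  have he : Function.Injective fun j => (e j : ι) := Subtype.val_injective.comp e.injective
  refine ⟨Function.invFun fun j => (e j : ι), fun j => ?_⟩
  have hcell : Function.invFun (fun j => (e j : ι)) ∘ c ⁻¹' {j} =ᵐ[μ] c ⁻¹' {(e j : ι)} := by
    filter_upwards [hcI] with x hx
    obtain ⟨l, hl⟩ := e.surjective ⟨c x, hx⟩
    have hlx : c x = e l := by rw [hl]
    refine propext ?_
    change Function.invFun _ (c x) = j ↔ c x = e j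
    rw [hlx, Function.leftInverse_invFun he l, Subtype.coe_inj, e.injective.eq_iff]
  rw [measure_congr hcell]
  exact ⟨pos_iff_ne_zero.2 (e j).2, hcv _⟩

theorem exists_isCappedLabelling [TopologicalSpace X]
    [HereditarilyLindelofSpace X] [MeasurableSpace X] [OpensMeasurableSpace X] (μ : Measure X)
    [μ.OuterRegular] [NullSingletonClass μ] {v : ℝ≥0∞} (hv : v ≠ 0) :
    ∃ c : X → ℕ, IsCappedLabelling μ v c := by
  cases isEmpty_or_nonempty X
  · exact ⟨0, measurable_const, fun i => by simp [eq_empty_of_isEmpty]⟩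
  have hsmall : ∀ x : X, ∃ U : Set X, x ∈ U ∧ IsOpen U ∧ μ U < v := fun x => by
    obtain ⟨U, hxU, hU, hUv⟩ := ({x} : Set X).exists_isOpen_lt_of_lt (μ := μ) v
      (by simpa using pos_iff_ne_zero.2 hv)
    exact ⟨U, hxU rfl, hU, hUv⟩
  choose U hxU hU hUv using hsmall
  obtain ⟨t, ht⟩ := eq_open_union_nat U hU
  have hcover : ∀ x, ∃ n, x ∈ U (t n) := fun x =>
    mem_iUnion.1 (ht ▸ mem_iUnion.2 ⟨x, hxU x⟩)
  classical
  refine ⟨fun x => Nat.find (hcover x),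
    measurable_find hcover fun n => (hU (t n)).measurableSet, fun n => ?_⟩
  refine (measure_mono ?_).trans (hUv (t n)).le
  rintro x rfl
  exact Nat.find_spec (hcover x)

end Labellings

section Sequences

theorem limsup_atTop_le_of_forall_mem_Ico {α β : Type*} [LinearOrder α] [NoMaxOrder α]
    [CompleteLinearOrder β] [DenselyOrdered β] [TopologicalSpace β] [OrderTopology β]
    {ρ : ℕ → α} (hρ : Monotone ρ) (hρ_top : Tendsto ρ atTop atTop) {f : α → β} {b : ℕ → β} {L : β}
    (hb : Tendsto b atTop (𝓝 L)) (hf : ∀ k, ∀ r ∈ Ico (ρ k) (ρ (k + 1)), f r ≤ b k) :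
    limsup f atTop ≤ L := by
  refine le_of_forall_gt_imp_ge_of_dense fun c hc => ?_
  obtain ⟨K, hK⟩ := eventually_atTop.1 (hb.eventually_lt_const hc)
  refine limsup_le_of_le (h := (eventually_ge_atTop (ρ K)).mono fun r hr => ?_)
  have : r ∈ ⋃ k, Ico (ρ k) (ρ (k + 1)) := by
    rw [show ⋃ k, Ico (ρ k) (ρ (k + 1)) = Ici (ρ 0) from iUnion_Ico_map_succ_eq_Ici
      (fun k => hρ k.zero_le) (not_bddAbove_of_tendsto_atTop hρ_top)]
    exact (hρ K.zero_le).trans hr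
  obtain ⟨k, hk⟩ := mem_iUnion.1 this
  have hKk : K ≤ k := Nat.lt_succ_iff.1 (hρ.reflect_lt (hr.trans_lt hk.2))
  exact (hf k r hk).trans (hK k hKk).le

theorem exists_strictMono_tendsto_of_frequently {p : ℕ → ℝ → Prop} {q : ℕ → ℝ → ℝ → Prop}
    (hp : ∀ k, ∃ᶠ r in atTop, p k r) (hq : ∀ k s, ∀ᶠ r in atTop, q k s r) :
    ∃ ρ : ℕ → ℝ, StrictMono ρ ∧ Tendsto ρ atTop atTop ∧ (∀ k, p k (ρ k)) ∧
      ∀ k, q k (ρ k) (ρ (k + 1)) := by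
  obtain ⟨r₀, hr₀⟩ := (hp 0).exists
  have hstep : ∀ k s, ∃ r, p (k + 1) r ∧ q k s r ∧ s + 1 ≤ r := fun k s =>
    ((hp (k + 1)).and_eventually ((hq k s).and (eventually_ge_atTop (s + 1)))).exists
  choose next hp_next hq_next h_next using hstep
  let ρ : ℕ → ℝ := fun k => Nat.rec r₀ next k
  have hρ_lower : ∀ k : ℕ, r₀ + k ≤ ρ k := fun k => by
    induction k with
    | zero => simp [ρ]
    | succ k ih => push_cast; linarith [h_next k (ρ k)]
  refine ⟨ρ, strictMono_nat_of_lt_succ fun k => (lt_add_one _).trans_le (h_next k (ρ k)),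
    tendsto_atTop_mono hρ_lower (tendsto_atTop_add_const_left _ _ tendsto_natCast_atTop_atTop),
    fun k => ?_, fun k => hq_next k (ρ k)⟩
  cases k with
  | zero => exact hr₀
  | succ k => exact hp_next k (ρ k)

end Sequences

section UpperDensity

variable {X : Type*} [PseudoMetricSpace X] [MeasurableSpace X] {ν μ : Measure X} {o : X}

/-- The limiting perimeter-per-volume ratio of a set of walls `A`: perimeter is measured by `ν`,
volume by `μ`, on larger and larger closed balls around `o`. -/
noncomputable def upperDensity (ν μ : Measure X) (o : X) (A : Set X) : ℝ≥0∞ :=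
  limsup (fun r : ℝ => ν (A ∩ closedBall o r) / μ (closedBall o r)) atTop

theorem upperDensity_mono {A B : Set X} (h : A ⊆ B) :
    upperDensity ν μ o A ≤ upperDensity ν μ o B :=
  limsup_le_limsup <| Eventually.of_forall fun _ =>
    ENNReal.div_le_div_right (measure_mono (inter_subset_inter_left _ h)) _

/-- The properties of perimeter `ν` and volume `μ` used to interpolate between partitions along
spheres around `o`: bounded balls have finite volume, the total volume is infinite, and spheres
have asymptotically no perimeter per enclosed volume. -/
structure HasNegligibleSpheres (ν μ : Measure X) (o : X) : Prop where
  closedBall_ne_top : ∀ r, μ (closedBall o r) ≠ ⊤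
  tendsto_closedBall : Tendsto (fun r : ℝ => μ (closedBall o r)) atTop (𝓝 ⊤)
  tendsto_sphere : Tendsto (fun r : ℝ => ν (sphere o r) / μ (closedBall o r)) atTop (𝓝 0)

namespace HasNegligibleSpheres

theorem measure_univ (h : HasNegligibleSpheres ν μ o) : μ univ = ⊤ :=
  top_le_iff.1 (le_of_tendsto' h.tendsto_closedBall fun _ => measure_mono (subset_univ _))

theorem eventually_le_mul_of_div_lt (h : HasNegligibleSpheres ν μ o) {f : ℝ → ℝ≥0∞} {c : ℝ≥0∞}
    (hf : ∀ᶠ r in atTop, f r / μ (closedBall o r) < c) :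
    ∀ᶠ r in atTop, f r ≤ c * μ (closedBall o r) := by
  filter_upwards [hf, h.tendsto_closedBall.eventually_ne ENNReal.top_ne_zero] with r hr hr₀
  exact (ENNReal.div_le_iff hr₀ (h.closedBall_ne_top r)).1 hr.le

theorem eventually_sphere_le (h : HasNegligibleSpheres ν μ o) {η : ℝ≥0∞} (hη : η ≠ 0) :
    ∀ᶠ r in atTop, ν (sphere o r) ≤ η * μ (closedBall o r) :=
  h.eventually_le_mul_of_div_lt (h.tendsto_sphere.eventually_lt_const (pos_iff_ne_zero.2 hη))

theorem eventually_forall_ge_le_mul (h : HasNegligibleSpheres ν μ o) {A : Set X} {c : ℝ≥0∞}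
    (hA : upperDensity ν μ o A < c) :
    ∀ᶠ r in atTop, ∀ t ≥ r, ν (A ∩ closedBall o t) ≤ c * μ (closedBall o t) :=
  eventually_forall_ge_atTop.2 (h.eventually_le_mul_of_div_lt (eventually_lt_of_limsup_lt hA))

theorem eventually_const_le_mul (h : HasNegligibleSpheres ν μ o) {a η : ℝ≥0∞} (ha : a ≠ ⊤)
    (hη : η ≠ 0) : ∀ᶠ r in atTop, a ≤ η * μ (closedBall o r) :=
  (h.tendsto_closedBall.eventually_const_lt (ENNReal.div_lt_top ha hη)).mono fun _ hr => by
    rw [mul_comm]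
    exact (ENNReal.div_le_iff_le_mul (.inl hη) (.inr hr.ne_bot)).1 hr.le

end HasNegligibleSpheres

theorem frequently_mul_le_add {A : Set X} {C η : ℝ≥0∞} (hC : C ≠ ⊤) (hη : η ≠ 0)
    (hA : C ≤ upperDensity ν μ o A) :
    ∃ᶠ r in atTop, C * μ (closedBall o r) ≤
      ν (A ∩ closedBall o r) + η * μ (closedBall o r) := by
  rcases eq_or_ne C 0 with rfl | hC₀
  · exact Frequently.of_forall fun r => by simp
  have hlt : C - η < upperDensity ν μ o A := (ENNReal.sub_lt_self hC hC₀ hη).trans_le hA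
  refine (frequently_lt_of_lt_limsup (h := hlt)).mono fun r hr => ?_
  calc C * μ (closedBall o r) ≤ (C - η + η) * μ (closedBall o r) := by gcongr; exact le_tsub_add
    _ = (C - η) * μ (closedBall o r) + η * μ (closedBall o r) := add_mul _ _ _
    _ ≤ ν (A ∩ closedBall o r) + η * μ (closedBall o r) := by
        gcongr; exact ENNReal.mul_le_of_le_div hr.le

end UpperDensity

section Switching

theorem measure_inter_add_le {X : Type*} [MeasurableSpace X] {ν : Measure X} {s t A B : Set X}
    (hs : MeasurableSet s) (hst : s ⊆ t) (h : A ∩ (t \ s) ⊆ B) :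
    ν (A ∩ t) + ν (B ∩ s) ≤ ν (A ∩ s) + ν (B ∩ t) := by
  have split : ∀ D : Set X, ν (D ∩ t) = ν (D ∩ s) + ν (D ∩ (t \ s)) := fun D => by
    rw [← measure_inter_add_sdiff (D ∩ t) hs, inter_assoc, inter_eq_right.2 hst, inter_sdiff_assoc]
  rw [split A, split B, add_right_comm, ← add_assoc]
  gcongr _ + ?_
  exact measure_mono (subset_inter h inter_subset_right)

variable {X : Type*} [PseudoMetricSpace X] {o : X} {ρ : ℕ → ℝ} {A : Set X} {B : ℕ → Set X}

/-- The walls `A` are among the walls `B k` strictly between the spheres of radii `ρ k` and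
`ρ (k + 1)`, and among the walls `B 0` inside the first sphere. The remaining spheres are free. -/
structure FollowsShells (o : X) (ρ : ℕ → ℝ) (B : ℕ → Set X) (A : Set X) : Prop where
  core : A ∩ closedBall o (ρ 0) ⊆ B 0
  shell : ∀ k, A ∩ (ball o (ρ (k + 1)) \ closedBall o (ρ k)) ⊆ B k

variable [MeasurableSpace X] {ν μ : Measure X} {C : ℝ≥0∞} {ε : ℕ → ℝ≥0∞}

theorem measure_inter_closedBall_le {D : Set X} {s r : ℝ}
    (h : A ∩ (ball o r \ closedBall o s) ⊆ D) :
    ν (A ∩ closedBall o r) ≤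
      ν (A ∩ closedBall o s) + ν (D ∩ closedBall o r) + ν (sphere o r) := by
  refine (measure_mono fun x hx => ?_).trans
    ((measure_union_le _ _).trans (add_le_add_left (measure_union_le _ _) _))
  rcases (mem_closedBall.1 hx.2).lt_or_eq with hxr | hxr
  · by_cases hxs : x ∈ closedBall o s
    · exact .inl (.inl ⟨hx.1, hxs⟩)
    · exact .inl (.inr ⟨h ⟨hx.1, hxr, hxs⟩, hx.2⟩)
  · exact .inr hxr

/-- Radii at which to switch from the walls `B k` to the walls `B (k + 1)`. Up to an error
governed by `ε`, the ratio of `B k` is at least `C` at the start of its shell and at most `C` from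
there on, the separating spheres are negligible, and so is everything inside earlier spheres. -/
structure IsSwitchSequence (ν μ : Measure X) (o : X) (B : ℕ → Set X) (C : ℝ≥0∞) (ε : ℕ → ℝ≥0∞)
    (ρ : ℕ → ℝ) : Prop where
  strictMono : StrictMono ρ
  tendsto : Tendsto ρ atTop atTop
  mul_le : ∀ k, C * μ (closedBall o (ρ k)) ≤
    ν (B k ∩ closedBall o (ρ k)) + ε k * μ (closedBall o (ρ k))
  le_mul : ∀ k, ∀ r ≥ ρ k, ν (B k ∩ closedBall o r) ≤ (C + ε (k + 1)) * μ (closedBall o r)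
  sphere_le : ∀ k, ν (sphere o (ρ k)) ≤ ε k * μ (closedBall o (ρ k))
  growth : ∀ k, (C + 3) * μ (closedBall o (ρ k)) ≤ ε (k + 1) * μ (closedBall o (ρ (k + 1)))

theorem HasNegligibleSpheres.exists_isSwitchSequence (h : HasNegligibleSpheres ν μ o)
    (hC : C ≠ ⊤) (hε : ∀ k, ε k ≠ 0) (hCB : ∀ k, C ≤ upperDensity ν μ o (B k))
    (hBC : ∀ k, upperDensity ν μ o (B k) < C + ε (k + 1)) :
    ∃ ρ, IsSwitchSequence ν μ o B C ε ρ := by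
  obtain ⟨ρ, hmono, htop, hρ, hgrowth⟩ := exists_strictMono_tendsto_of_frequently
    (fun k => (frequently_mul_le_add hC (hε k) (hCB k)).and_eventually
      ((h.eventually_forall_ge_le_mul (hBC k)).and (h.eventually_sphere_le (hε k))))
    (fun k s => h.eventually_const_le_mul
      (ENNReal.mul_ne_top (by finiteness : C + 3 ≠ ⊤) (h.closedBall_ne_top s)) (hε (k + 1)))
  exact ⟨ρ, hmono, htop, fun k => (hρ k).1, fun k => (hρ k).2.1, fun k => (hρ k).2.2, hgrowth⟩

namespace IsSwitchSequence

theorem measure_inter_closedBall_switch_le (hρ : IsSwitchSequence ν μ o B C ε ρ)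
    (hε : Antitone ε) (hε₁ : ε 0 ≤ 1) (hA : FollowsShells o ρ B A) (k : ℕ) :
    ν (A ∩ closedBall o (ρ k)) ≤ (C + 3 * ε k) * μ (closedBall o (ρ k)) := by
  induction k with
  | zero =>
    calc ν (A ∩ closedBall o (ρ 0))
      _ ≤ ν (B 0 ∩ closedBall o (ρ 0)) := measure_mono (subset_inter hA.core inter_subset_right)
      _ ≤ (C + ε 1) * μ (closedBall o (ρ 0)) := hρ.le_mul 0 _ le_rfl
      _ ≤ (C + 3 * ε 0) * μ (closedBall o (ρ 0)) := by
          gcongr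
          exact (hε zero_le_one).trans (le_mul_of_one_le_left' (by norm_num))
  | succ k ih =>
    set V := μ (closedBall o (ρ (k + 1)))
    have hcore : ν (A ∩ closedBall o (ρ k)) ≤ ε (k + 1) * V := calc
      _ ≤ (C + 3 * ε k) * μ (closedBall o (ρ k)) := ih
      _ ≤ (C + 3) * μ (closedBall o (ρ k)) := by
          gcongr; exact mul_le_of_le_one_right' ((hε k.zero_le).trans hε₁)
      _ ≤ ε (k + 1) * V := hρ.growth k
    calc ν (A ∩ closedBall o (ρ (k + 1)))
      _ ≤ ν (A ∩ closedBall o (ρ k)) + ν (B k ∩ closedBall o (ρ (k + 1))) +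
          ν (sphere o (ρ (k + 1))) := measure_inter_closedBall_le (hA.shell k)
      _ ≤ ε (k + 1) * V + (C + ε (k + 1)) * V + ε (k + 1) * V :=
          add_le_add_three hcore (hρ.le_mul k _ (hρ.strictMono k.lt_succ_self).le)
            (hρ.sphere_le _)
      _ = (C + 3 * ε (k + 1)) * V := by ring

variable [OpensMeasurableSpace X]

theorem measure_inter_closedBall_le_of_mem_Ico (hρ : IsSwitchSequence ν μ o B C ε ρ)
    (h : HasNegligibleSpheres ν μ o) (hC : C ≠ ⊤) (hε : Antitone ε) (hε₁ : ε 0 ≤ 1)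
    (hA : FollowsShells o ρ B A) {k : ℕ} {r : ℝ} (hr : r ∈ Ico (ρ k) (ρ (k + 1))) :
    ν (A ∩ closedBall o r) ≤ (C + 5 * ε k) * μ (closedBall o r) := by
  set W := μ (closedBall o (ρ k))
  set V := μ (closedBall o r)
  have hsub : closedBall o (ρ k) ⊆ closedBall o r := closedBall_subset_closedBall hr.1
  have hWV : W ≤ V := measure_mono hsub
  have hshell : A ∩ (closedBall o r \ closedBall o (ρ k)) ⊆ B k :=
    (inter_subset_inter_right A
      (sdiff_subset_sdiff_left (closedBall_subset_ball hr.2))).trans (hA.shell k)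
  refine (ENNReal.add_le_add_iff_right
    (ENNReal.mul_ne_top hC (h.closedBall_ne_top (ρ k)))).1 ?_
  calc ν (A ∩ closedBall o r) + C * W
    _ ≤ ν (A ∩ closedBall o r) + (ν (B k ∩ closedBall o (ρ k)) + ε k * W) := by
        gcongr; exact hρ.mul_le k
    _ = ν (A ∩ closedBall o r) + ν (B k ∩ closedBall o (ρ k)) + ε k * W := (add_assoc _ _ _).symm
    _ ≤ ν (A ∩ closedBall o (ρ k)) + ν (B k ∩ closedBall o r) + ε k * W := by
        gcongr ?_ + _; exact measure_inter_add_le measurableSet_closedBall hsub hshell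
    _ ≤ (C + 3 * ε k) * W + (C + ε (k + 1)) * V + ε k * W := by
        gcongr
        · exact hρ.measure_inter_closedBall_switch_le hε hε₁ hA k
        · exact hρ.le_mul k r hr.1
    _ = C * V + C * W + (4 * ε k * W + ε (k + 1) * V) := by ring
    _ ≤ C * V + C * W + (4 * ε k * V + ε k * V) := by gcongr; exact hε k.le_succ
    _ = (C + 5 * ε k) * V + C * W := by ring

theorem upperDensity_le (hρ : IsSwitchSequence ν μ o B C ε ρ)
    (h : HasNegligibleSpheres ν μ o) (hC : C ≠ ⊤) (hε : Antitone ε) (hε₁ : ε 0 ≤ 1)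
    (hε₀ : Tendsto ε atTop (𝓝 0)) (hA : FollowsShells o ρ B A) :
    upperDensity ν μ o A ≤ C := by
  have hlim : Tendsto (fun k => C + 5 * ε k) atTop (𝓝 C) := by
    simpa using tendsto_const_nhds.add (ENNReal.Tendsto.const_mul hε₀ (.inr (by finiteness)))
  exact limsup_atTop_le_of_forall_mem_Ico hρ.strictMono.monotone hρ.tendsto hlim fun k r hr =>
    ENNReal.div_le_of_le_mul (hρ.measure_inter_closedBall_le_of_mem_Ico h hC hε hε₁ hA hr)

end IsSwitchSequence

end Switching

section Gluing

variable {ρ : ℕ → ℝ}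

/-- The number of the shell containing points at distance `t` from the centre: shell `k` is
`ρ k ≤ t < ρ (k + 1)`, except that shell `0` also takes all `t < ρ 0`. -/
noncomputable def shellIndex (ρ : ℕ → ℝ) (t : ℝ) : ℕ :=
  sInf {k | t < ρ (k + 1)}

theorem shellIndex_le_iff (hρ : Monotone ρ) (hρ_top : Tendsto ρ atTop atTop) {t : ℝ} {k : ℕ} :
    shellIndex ρ t ≤ k ↔ t < ρ (k + 1) := by
  have hne : {k | t < ρ (k + 1)}.Nonempty :=
    (((tendsto_add_atTop_iff_nat 1).2 hρ_top).eventually_gt_atTop t).exists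
  exact ⟨fun h => (Nat.sInf_mem hne : t < _).trans_le (hρ (Nat.succ_le_succ h)),
    fun h => Nat.sInf_le h⟩

theorem measurable_shellIndex (hρ : Monotone ρ) (hρ_top : Tendsto ρ atTop atTop) :
    Measurable (shellIndex ρ) :=
  measurable_of_Iic fun k => by
    simpa only [preimage, mem_Iic, shellIndex_le_iff hρ hρ_top] using! measurableSet_Iio

theorem shellIndex_eq_zero (hρ : Monotone ρ) (hρ_top : Tendsto ρ atTop atTop) {t : ℝ}
    (ht : t < ρ 1) : shellIndex ρ t = 0 :=
  Nat.le_zero.1 ((shellIndex_le_iff hρ hρ_top).2 ht)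

theorem shellIndex_eq (hρ : Monotone ρ) (hρ_top : Tendsto ρ atTop atTop) {t : ℝ} {k : ℕ}
    (ht : t ∈ Ico (ρ k) (ρ (k + 1))) : shellIndex ρ t = k := by
  refine le_antisymm ((shellIndex_le_iff hρ hρ_top).2 ht.2) ?_
  cases k with
  | zero => exact Nat.zero_le _
  | succ k => exact not_le.1 fun h => ht.1.not_gt ((shellIndex_le_iff hρ hρ_top).1 h)

variable {X ι : Type*} [PseudoMetricSpace X] {o : X} {c : ℕ → X → ι}

/-- The labelling that uses `c k` on the `k`-th shell around `o`. Labels remember the shell, so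
cells of different shells stay separate. -/
noncomputable def shellGlue (o : X) (ρ : ℕ → ℝ) (c : ℕ → X → ι) (x : X) : ℕ × ι :=
  (shellIndex ρ (dist x o), c (shellIndex ρ (dist x o)) x)

theorem preimage_shellGlue_subset (k : ℕ) (i : ι) : shellGlue o ρ c ⁻¹' {(k, i)} ⊆ c k ⁻¹' {i} := by
  rintro x hx
  obtain ⟨rfl, rfl⟩ := Prod.mk.inj hx
  rfl

theorem measurable_shellGlue [MeasurableSpace X] [OpensMeasurableSpace X] [MeasurableSpace ι]
    (hρ : Monotone ρ) (hρ_top : Tendsto ρ atTop atTop) (hc : ∀ k, Measurable (c k)) :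
    Measurable (shellGlue o ρ c) := by
  have hindex : Measurable fun x => shellIndex ρ (dist x o) :=
    (measurable_shellIndex hρ hρ_top).comp (continuous_id.dist continuous_const).measurable
  have hlabel : Measurable fun p : ℕ × X => c p.1 p.2 := measurable_from_prod_countable_right hc
  exact hindex.prodMk (hlabel.comp (hindex.prodMk measurable_id))

theorem followsShells_interface_shellGlue (hρ : StrictMono ρ) (hρ_top : Tendsto ρ atTop atTop) :
    FollowsShells o ρ (fun k => interface (c k)) (interface (shellGlue o ρ c)) := by
  have hsub : ∀ (k : ℕ) (U : Set X), IsOpen U → (∀ x ∈ U, shellIndex ρ (dist x o) = k) →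
      interface (shellGlue o ρ c) ∩ U ⊆ interface (c k) := fun k U hU hk =>
    interface_inter_subset_of_eqOn_comp (f := Prod.mk k) hU fun x hx => by
      simp only [shellGlue, hk x hx, Function.comp_apply]
  refine ⟨?_, fun k => hsub k _ (isOpen_ball.sdiff isClosed_closedBall) fun x hx =>
    shellIndex_eq hρ.monotone hρ_top ⟨(not_le.1 hx.2).le, hx.1⟩⟩
  exact (inter_subset_inter_right _ (closedBall_subset_ball (hρ zero_lt_one))).trans
    (hsub 0 (ball o (ρ 1)) isOpen_ball fun x hx => shellIndex_eq_zero hρ.monotone hρ_top hx)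

end Gluing

section Optimal

variable {X ι : Type*} [PseudoMetricSpace X] [MeasurableSpace X] [MeasurableSpace ι]
  {ν μ : Measure X} {o : X} {v : ℝ≥0∞}

theorem IsCappedLabelling.exists_measure_pos [Countable ι] [DiscreteMeasurableSpace ι] {c : X → ι}
    (hc : IsCappedLabelling μ v c) (hμ : μ univ = ⊤) (hv : v ≠ ⊤) :
    ∃ c' : X → ℕ, IsCappedLabelling μ v c' ∧ (∀ j, 0 < μ (c' ⁻¹' {j})) ∧
      upperDensity ν μ o (interface c') ≤ upperDensity ν μ o (interface c) := by
  obtain ⟨f, hf⟩ := exists_merge_measure_pos hμ hv hc.measure_le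
  exact ⟨f ∘ c, ⟨Measurable.of_discrete.comp hc.measurable, fun j => (hf j).2⟩,
    fun j => (hf j).1, upperDensity_mono (interface_comp_subset f c)⟩

variable [OpensMeasurableSpace X]

theorem HasNegligibleSpheres.exists_isCappedLabelling_upperDensity_le
    (h : HasNegligibleSpheres ν μ o) {C : ℝ≥0∞} (hC : C ≠ ⊤)
    (hlim : ∀ η ≠ 0, ∃ c : X → ι, IsCappedLabelling μ v c ∧
      C ≤ upperDensity ν μ o (interface c) ∧ upperDensity ν μ o (interface c) < C + η) :
    ∃ c : X → ℕ × ι, IsCappedLabelling μ v c ∧ upperDensity ν μ o (interface c) ≤ C := by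
  obtain ⟨ε, hε, hε_mem, hε₀⟩ := exists_seq_strictAnti_tendsto' (zero_lt_one (α := ℝ≥0∞))
  choose c hc hCc hcC using fun k => hlim (ε (k + 1)) (hε_mem _).1.ne'
  obtain ⟨ρ, hρ⟩ := h.exists_isSwitchSequence hC (fun k => (hε_mem k).1.ne') hCc hcC
  refine ⟨shellGlue o ρ c, ⟨measurable_shellGlue hρ.strictMono.monotone hρ.tendsto
    fun k => (hc k).measurable, fun i =>
      (measure_mono (preimage_shellGlue_subset i.1 i.2)).trans ((hc i.1).measure_le i.2)⟩, ?_⟩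
  exact hρ.upperDensity_le h hC hε.antitone (hε_mem 0).2.le hε₀
    (followsShells_interface_shellGlue hρ.strictMono hρ.tendsto)

theorem HasNegligibleSpheres.exists_optimal_isCappedLabelling (h : HasNegligibleSpheres ν μ o)
    (hv : v ≠ ⊤) (hne : ∃ c : X → ℕ, IsCappedLabelling μ v c) :
    ∃ c : X → ℕ, IsCappedLabelling μ v c ∧ (∀ i, 0 < μ (c ⁻¹' {i})) ∧
      ∀ d : X → ℕ, IsCappedLabelling μ v d →
        upperDensity ν μ o (interface c) ≤ upperDensity ν μ o (interface d) := by
  set C := ⨅ d : {d : X → ℕ // IsCappedLabelling μ v d}, upperDensity ν μ o (interface d.1)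
  have hC_le (d : X → ℕ) (hd : IsCappedLabelling μ v d) : C ≤ upperDensity ν μ o (interface d) :=
    iInf_le (fun d : {d // IsCappedLabelling μ v d} => upperDensity ν μ o (interface d.1)) ⟨d, hd⟩
  suffices ∃ c : X → ℕ, IsCappedLabelling μ v c ∧ (∀ i, 0 < μ (c ⁻¹' {i})) ∧
      upperDensity ν μ o (interface c) ≤ C by
    obtain ⟨c, hc, hc_pos, hcC⟩ := this
    exact ⟨c, hc, hc_pos, fun d hd => hcC.trans (hC_le d hd)⟩
  rcases eq_or_ne C ⊤ with hC | hC
  · obtain ⟨c, hc⟩ := hne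
    obtain ⟨c', hc', hc'_pos, -⟩ := hc.exists_measure_pos (ν := ν) (o := o) h.measure_univ hv
    exact ⟨c', hc', hc'_pos, hC ▸ le_top⟩
  · obtain ⟨c, hc, hcC⟩ := h.exists_isCappedLabelling_upperDensity_le hC fun η hη => by
      obtain ⟨⟨c, hc⟩, hcη⟩ := iInf_lt_iff.1 (ENNReal.lt_add_right hC hη)
      exact ⟨c, hc, hC_le c hc, hcη⟩
    obtain ⟨c', hc', hc'_pos, hc'c⟩ := hc.exists_measure_pos h.measure_univ hv
    exact ⟨c', hc', hc'_pos, hc'c.trans hcC⟩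

end Optimal

section Spheres

open scoped Pointwise

variable {E : Type*} [NormedAddCommGroup E] [NormedSpace ℝ E]

theorem norm_normalize_sub_normalize_le {x : E} (hx : x ≠ 0) (y : E) :
    ‖NormedSpace.normalize x - NormedSpace.normalize y‖ ≤ 2 * ‖x‖⁻¹ * ‖x - y‖ := by
  rcases eq_or_ne y 0 with rfl | hy
  · simp [NormedSpace.norm_normalize_eq_one_iff.2 hx, hx]
  have hy' : ‖y‖ ≠ 0 := norm_ne_zero_iff.2 hy
  have hinv : ‖x‖⁻¹ - ‖y‖⁻¹ = ‖x‖⁻¹ * (‖y‖ - ‖x‖) * ‖y‖⁻¹ :=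
    inv_sub_inv' (norm_ne_zero_iff.2 hx) hy'
  calc ‖NormedSpace.normalize x - NormedSpace.normalize y‖
    _ = ‖‖x‖⁻¹ • (x - y) + (‖x‖⁻¹ - ‖y‖⁻¹) • y‖ := by
        congr 1; simp only [NormedSpace.normalize]; module
    _ ≤ ‖x‖⁻¹ * ‖x - y‖ + ‖x‖⁻¹ * |‖y‖ - ‖x‖| := by
        refine (norm_add_le _ _).trans_eq ?_
        rw [norm_smul, norm_smul, hinv, norm_mul, norm_mul, norm_inv, norm_norm, norm_inv,
          norm_norm, inv_mul_cancel_right₀ hy', Real.norm_eq_abs]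
    _ ≤ ‖x‖⁻¹ * ‖x - y‖ + ‖x‖⁻¹ * ‖x - y‖ := by
        gcongr; exact (abs_norm_sub_norm_le y x).trans_eq (norm_sub_rev y x)
    _ = 2 * ‖x‖⁻¹ * ‖x - y‖ := by ring

theorem lipschitzOnWith_normalize (K : ℝ≥0) :
    LipschitzOnWith (2 * K) (NormedSpace.normalize : E → E) {x | 1 ≤ K * ‖x‖} := by
  refine LipschitzOnWith.of_dist_le_mul fun x (hx : 1 ≤ K * ‖x‖) y _ => ?_
  have hx₀ : x ≠ 0 := by rintro rfl; norm_num at hx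
  rw [dist_eq_norm, dist_eq_norm]
  refine (norm_normalize_sub_normalize_le hx₀ y).trans ?_
  push_cast
  gcongr
  exact (inv_le_iff_one_le_mul₀ (norm_pos_iff.2 hx₀)).2 hx

theorem hausdorffMeasure_sphere_pi_lt_top (m : ℕ) :
    μH[m] (sphere (0 : Fin (m + 1) → ℝ) 1) < ⊤ := by
  let face (p : Fin (m + 1) × ℝ) (y : Fin m → ℝ) : Fin (m + 1) → ℝ := p.1.insertNth p.2 y
  have hface (p : Fin (m + 1) × ℝ) : μH[m] (face p '' closedBall 0 1) < ⊤ := by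
    have hlip : LipschitzWith 1 (face p) := LipschitzWith.of_dist_le_mul fun x y => by
      simp [face, Fin.dist_insertNth_insertNth]
    have hvol : (μH[m] : Measure (Fin m → ℝ)) = volume := by
      simpa using hausdorffMeasure_pi_real (ι := Fin m)
    refine (hlip.hausdorffMeasure_image_le m.cast_nonneg _).trans_lt ?_
    simp [hvol]
  have hcover : sphere (0 : Fin (m + 1) → ℝ) 1 ⊆
      ⋃ p ∈ (univ ×ˢ {1, -1} : Set (Fin (m + 1) × ℝ)), face p '' closedBall 0 1 := by
    intro x hx
    rw [mem_sphere_zero_iff_norm] at hx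
    obtain ⟨i, hi : ‖x i‖ = ‖x‖⟩ := (IsGreatest.pi_norm x).1
    refine mem_biUnion (x := (i, x i)) ⟨mem_univ _, eq_or_eq_neg_of_abs_eq (hi.trans hx)⟩
      ⟨i.removeNth x, ?_, i.insertNth_self_removeNth x⟩
    rw [mem_closedBall_zero_iff, pi_norm_le_iff_of_nonneg zero_le_one]
    exact fun j => (norm_le_pi_norm x _).trans_eq hx
  exact (measure_mono hcover).trans_lt
    (measure_biUnion_lt_top (toFinite _) fun p _ => hface p)

variable [MeasurableSpace E] [BorelSpace E]

theorem hausdorffMeasure_sphere_zero {d r : ℝ} (hd : 0 ≤ d) (hr : 0 < r) :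
    μH[d] (sphere (0 : E) r) = ENNReal.ofReal r ^ d * μH[d] (sphere (0 : E) 1) := by
  have hsmul : sphere (0 : E) r = r • sphere (0 : E) 1 := by
    rw [smul_sphere' hr.ne', smul_zero, mul_one, Real.norm_of_nonneg hr.le]
  rw [hsmul, Measure.hausdorffMeasure_smul₀ hd hr.ne', ENNReal.smul_def, smul_eq_mul,
    ENNReal.coe_rpow_of_nonneg _ hd, ← enorm_eq_nnnorm, Real.enorm_of_nonneg hr.le]

variable [FiniteDimensional ℝ E] [Nontrivial E]

theorem hausdorffMeasure_unitSphere_lt_top : μH[finrank ℝ E - 1] (sphere (0 : E) 1) < ⊤ := by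
  obtain ⟨m, hm⟩ := Nat.exists_eq_add_one.2 (finrank_pos (R := ℝ) (M := E))
  rw [hm, Nat.cast_succ, add_sub_cancel_right]
  let e : E ≃L[ℝ] (Fin (m + 1) → ℝ) := .ofFinrankEq (by simp [hm])
  have hlip := (lipschitzOnWith_normalize (E := E) ‖(e : E →L[ℝ] Fin (m + 1) → ℝ)‖₊).comp
    e.symm.lipschitz.lipschitzOnWith (s := sphere 0 1) fun z hz => by
      simpa [mem_sphere_zero_iff_norm.1 hz] using
        (e : E →L[ℝ] Fin (m + 1) → ℝ).le_opNorm (e.symm z)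
  have hsub : sphere (0 : E) 1 ⊆ NormedSpace.normalize ∘ e.symm '' sphere 0 1 := fun x hx => by
    have hx₁ : ‖x‖ = 1 := mem_sphere_zero_iff_norm.1 hx
    have hx₀ : x ≠ 0 := ne_zero_of_mem_unit_sphere ⟨x, hx⟩
    have hex : e x ≠ 0 := e.map_ne_zero_iff.2 hx₀
    refine ⟨NormedSpace.normalize (e x),
      mem_sphere_zero_iff_norm.2 (NormedSpace.norm_normalize_eq_one_iff.2 hex), ?_⟩
    have he : e.symm (NormedSpace.normalize (e x)) = ‖e x‖⁻¹ • x := by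
      rw [NormedSpace.normalize, map_smul, e.symm_apply_apply]
    rw [Function.comp_apply, he,
      NormedSpace.normalize_smul_of_pos (inv_pos.2 (norm_pos_iff.2 hex)),
      NormedSpace.normalize_eq_self_of_norm_eq_one hx₁]
  calc μH[m] (sphere (0 : E) 1)
    _ ≤ μH[m] (NormedSpace.normalize ∘ e.symm '' sphere 0 1) := measure_mono hsub
    _ ≤ _ * μH[m] (sphere (0 : Fin (m + 1) → ℝ) 1) := hlip.hausdorffMeasure_image_le m.cast_nonneg
    _ < ⊤ := ENNReal.mul_lt_top (by finiteness) (hausdorffMeasure_sphere_pi_lt_top m)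

theorem hasNegligibleSpheres_hausdorffMeasure (μ : Measure E) [μ.IsAddHaarMeasure] :
    HasNegligibleSpheres μH[finrank ℝ E - 1] μ (0 : E) := by
  obtain ⟨m, hm⟩ := Nat.exists_eq_add_one.2 (finrank_pos (R := ℝ) (M := E))
  set b := μ (ball (0 : E) 1)
  set s := μH[m] (sphere (0 : E) 1)
  have hb : b ≠ 0 := (measure_ball_pos μ 0 one_pos).ne'
  have hs : s ≠ ⊤ := by
    simpa [hm, s] using (hausdorffMeasure_unitSphere_lt_top (E := E)).ne
  have hball (r : ℝ) (hr : 0 ≤ r) :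
      μ (closedBall (0 : E) r) = ENNReal.ofReal (r ^ m) * (ENNReal.ofReal r * b) := by
    rw [Measure.addHaar_closedBall μ 0 hr, hm, pow_succ, ENNReal.ofReal_mul (by positivity),
      mul_assoc]
  have hsphere (r : ℝ) (hr : 0 < r) :
      μH[finrank ℝ E - 1] (sphere (0 : E) r) = ENNReal.ofReal (r ^ m) * s := by
    rw [hm, Nat.cast_succ, add_sub_cancel_right, hausdorffMeasure_sphere_zero m.cast_nonneg hr,
      ENNReal.rpow_natCast, ENNReal.ofReal_pow hr.le]
  have hlin : Tendsto (fun r : ℝ => ENNReal.ofReal r * b) atTop (𝓝 ⊤) := by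
    simpa [ENNReal.top_mul hb] using
      ENNReal.Tendsto.mul_const (b := b) ENNReal.tendsto_ofReal_atTop (.inl ENNReal.top_ne_zero)
  refine ⟨fun r => measure_closedBall_lt_top.ne, ?_, ?_⟩
  · refine tendsto_nhds_top_mono hlin ?_
    filter_upwards [eventually_ge_atTop 1] with r hr
    rw [hball r (by linarith)]
    exact le_mul_of_one_le_left' (by simpa using one_le_pow₀ hr)
  · have hratio := ENNReal.Tendsto.const_div hlin (.inr hs)
    rw [ENNReal.div_top] at hratio
    refine hratio.congr' ?_
    filter_upwards [eventually_gt_atTop 0] with r hr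
    rw [hball r hr.le, hsphere r hr, ENNReal.mul_div_mul_left _ _ (by positivity) (by finiteness)]

end Spheres

theorem exists_subunit_cover_with_optimal_ratio_general {E : Type*} [NormedAddCommGroup E]
    [NormedSpace ℝ E] [FiniteDimensional ℝ E] [Nontrivial E] [MeasurableSpace E] [BorelSpace E]
    (μ : Measure E) [μ.IsAddHaarMeasure] {v : ℝ≥0∞} (hv₀ : v ≠ 0) (hv : v ≠ ⊤) :
    ∃ R : ℕ → Set E, IsMeasurablePartition R ∧ (∀ j, μ (R j) ≤ v) ∧ (∀ j, 0 < μ (R j)) ∧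
      ∀ S : ℕ → Set E, IsMeasurablePartition S → (∀ j, μ (S j) ≤ v) →
        upperDensity μH[finrank ℝ E - 1] μ 0 (⋃ j, frontier (R j)) ≤
          upperDensity μH[finrank ℝ E - 1] μ 0 (⋃ j, frontier (S j)) := by
  obtain ⟨c, hc, hc_pos, hc_opt⟩ := (hasNegligibleSpheres_hausdorffMeasure μ)
    |>.exists_optimal_isCappedLabelling hv (exists_isCappedLabelling μ hv₀)
  refine ⟨fun j => c ⁻¹' {j}, isMeasurablePartition_preimage_singleton hc.measurable,
    hc.measure_le, hc_pos, fun S hS hSv => ?_⟩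
  obtain ⟨d, hd, hdS⟩ := hS.exists_label
  simp only [← hdS] at hSv ⊢
  simpa only [iUnion_frontier_preimage_singleton] using hc_opt d ⟨hd, hSv⟩

/-- There is a countable family of pairwise disjoint measurable regions of positive volume
at most 1 covering `ℝⁿ` whose limiting perimeter-per-volume ratio is at most the optimal
ratio over genuine unit-volume partitions. -/
theorem exists_subunit_cover_with_optimal_ratio (n : ℕ) (hn : 2 ≤ n) :
    ∃ R : ℕ → Set (EuclideanSpace ℝ (Fin n)),
      Pairwise (Function.onFun Disjoint R) ∧ (∀ j, MeasurableSet (R j)) ∧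
      (∀ j, volume (R j) ≤ 1) ∧ (∀ j, 0 < volume (R j)) ∧ (⋃ j, R j) = univ ∧
      limitRatio n R ≤
        ⨅ (S : ℕ → Set (EuclideanSpace ℝ (Fin n))) (_ : IsUnitPartition n S),
          limitRatio n S := by
  have : Nonempty (Fin n) := ⟨⟨0, by omega⟩⟩
  obtain ⟨R, hR, hR_le, hR_pos, hR_opt⟩ := exists_subunit_cover_with_optimal_ratio_general
    (volume : Measure (EuclideanSpace ℝ (Fin n))) one_ne_zero ENNReal.one_ne_top
  refine ⟨R, hR.disjoint, hR.measurableSet, hR_le, hR_pos, hR.iUnion_eq, le_iInf₂ ?_⟩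
  rintro S ⟨hS_disj, hS_meas, hS_vol, hS_univ⟩
  have hRS := hR_opt S ⟨hS_disj, hS_meas, hS_univ⟩ fun j => (hS_vol j).le
  rwa [finrank_euclideanSpace_fin] at hRS
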